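/- arXiv:1306.6367 — 2 statements merged into one kernel-verified Lean document; each statement's English description precedes it below -/
import Mathlib

section
/- Let n ≥ 2, let U ⊆ ℝ^{n+1} be open, let y_1,…,y_{n−1}, z : U → ℝ be smooth, and let F : U → ℝ^{2n+1} be the graph map. Then the 3-form α ∧ ω_0 vanishes on the image of dF at every point of U (i.e. (α∧ω_0)_{F(p)}(dF_p(u), dF_p(v), dF_p(w)) = 0 for all p ∈ U and u,v,w ∈ ℝ^{n+1}) if and only if equations (E0), (E1), (E2), (E3) hold at every point of U for all admissible indices. -/
open scoped BigOperators

/-- Partial derivative of `f` in the `i`-th coordinate direction. -/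
noncomputable def pd {m : ℕ} (i : Fin m) (f : (Fin m → ℝ) → ℝ) (p : Fin m → ℝ) : ℝ :=
  fderiv ℝ f p (Pi.single i 1)

/-- Index of the coordinate `x_a` (for `1 ≤ a ≤ n-1`) in `ℝ^{n+1}` with
coordinates `(x_1, …, x_n, y_n)`. -/
def xIdx {n : ℕ} (a : Fin (n - 1)) : Fin (n + 1) := Fin.castLE (by omega) a

/-- Index of the coordinate `x_n`. -/
def xnIdx (n : ℕ) : Fin (n + 1) := ⟨n - 1, by omega⟩

/-- Index of the coordinate `y_n`. -/
def ynIdx (n : ℕ) : Fin (n + 1) := ⟨n, by omega⟩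

/-- Equation (E0). -/
noncomputable def E0 {n : ℕ} (y : Fin (n - 1) → (Fin (n + 1) → ℝ) → ℝ)
    (z : (Fin (n + 1) → ℝ) → ℝ) (a b c : Fin (n - 1)) (p : Fin (n + 1) → ℝ) : ℝ :=
  (pd (xIdx a) z p - y a p) * (pd (xIdx c) (y b) p - pd (xIdx b) (y c) p)
    - (pd (xIdx b) z p - y b p) * (pd (xIdx c) (y a) p - pd (xIdx a) (y c) p)
    + (pd (xIdx c) z p - y c p) * (pd (xIdx b) (y a) p - pd (xIdx a) (y b) p)

/-- Equation (E1). -/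
noncomputable def E1 {n : ℕ} (y : Fin (n - 1) → (Fin (n + 1) → ℝ) → ℝ)
    (z : (Fin (n + 1) → ℝ) → ℝ) (a b : Fin (n - 1)) (p : Fin (n + 1) → ℝ) : ℝ :=
  (pd (xIdx a) z p - y a p) * pd (xnIdx n) (y b) p
    - (pd (xIdx b) z p - y b p) * pd (xnIdx n) (y a) p
    + (pd (xnIdx n) z p - p (ynIdx n)) * (pd (xIdx b) (y a) p - pd (xIdx a) (y b) p)

/-- Equation (E2). -/
noncomputable def E2 {n : ℕ} (y : Fin (n - 1) → (Fin (n + 1) → ℝ) → ℝ)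
    (z : (Fin (n + 1) → ℝ) → ℝ) (a b : Fin (n - 1)) (p : Fin (n + 1) → ℝ) : ℝ :=
  (pd (xIdx a) z p - y a p) * pd (ynIdx n) (y b) p
    - (pd (xIdx b) z p - y b p) * pd (ynIdx n) (y a) p
    + pd (ynIdx n) z p * (pd (xIdx b) (y a) p - pd (xIdx a) (y b) p)

/-- Equation (E3). -/
noncomputable def E3 {n : ℕ} (y : Fin (n - 1) → (Fin (n + 1) → ℝ) → ℝ)
    (z : (Fin (n + 1) → ℝ) → ℝ) (a : Fin (n - 1)) (p : Fin (n + 1) → ℝ) : ℝ :=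
  pd (xIdx a) z p - (pd (xnIdx n) z p - p (ynIdx n)) * pd (ynIdx n) (y a) p
    + pd (ynIdx n) z p * pd (xnIdx n) (y a) p - y a p

/-- The function `Λ_{a,b}`. -/
noncomputable def Lam {n : ℕ} (y : Fin (n - 1) → (Fin (n + 1) → ℝ) → ℝ)
    (a b : Fin (n - 1)) (p : Fin (n + 1) → ℝ) : ℝ :=
  pd (ynIdx n) (y a) p * pd (xnIdx n) (y b) p - pd (ynIdx n) (y b) p * pd (xnIdx n) (y a) p
    + pd (xIdx b) (y a) p - pd (xIdx a) (y b) p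

/-- The graph map `F : ℝ^{n+1} → ℝ^{2n+1}`,
`F(x_1,…,x_n,y_n) = (x_1,…,x_n,y_1,…,y_{n-1},y_n,z)`. -/
noncomputable def graphMap (n : ℕ) (y : Fin (n - 1) → (Fin (n + 1) → ℝ) → ℝ)
    (z : (Fin (n + 1) → ℝ) → ℝ) (p : Fin (n + 1) → ℝ) : Fin (2 * n + 1) → ℝ := fun i =>
  if h1 : (i : ℕ) < n then p ⟨i, by omega⟩
  else if h2 : (i : ℕ) < 2 * n - 1 then y ⟨(i : ℕ) - n, by omega⟩ p
  else if h3 : (i : ℕ) = 2 * n - 1 then p (ynIdx n)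
  else z p

/-- The standard contact form `α = dz - Σ y_i dx_i` on `ℝ^{2n+1}` with coordinates
`(x_1,…,x_n,y_1,…,y_n,z)`, evaluated at the point `q` on the vector `v`. -/
noncomputable def contactForm (n : ℕ) (q v : Fin (2 * n + 1) → ℝ) : ℝ :=
  v ⟨2 * n, by omega⟩
    - ∑ i : Fin n, q ⟨n + i, by have := i.isLt; omega⟩ * v ⟨i, by have := i.isLt; omega⟩

/-- The standard symplectic form `ω₀ = Σ dx_i ∧ dy_i = dα` on `ℝ^{2n+1}`. -/
noncomputable def omega0 (n : ℕ) (u v : Fin (2 * n + 1) → ℝ) : ℝ :=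
  ∑ i : Fin n, (u ⟨i, by have := i.isLt; omega⟩ * v ⟨n + i, by have := i.isLt; omega⟩
    - u ⟨n + i, by have := i.isLt; omega⟩ * v ⟨i, by have := i.isLt; omega⟩)

/-- The 3-form `α ∧ ω₀` evaluated at the point `q` on the vectors `u, v, w`. -/
noncomputable def awedge (n : ℕ) (q u v w : Fin (2 * n + 1) → ℝ) : ℝ :=
  contactForm n q u * omega0 n v w - contactForm n q v * omega0 n u w
    + contactForm n q w * omega0 n u v

/-- The vector field `Ṽ_k = ∂_{x_k} - (∂y_k/∂y_n) ∂_{x_n} + (∂y_k/∂x_n) ∂_{y_n}` on `ℝ^{n+1}`. -/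
noncomputable def Vt (n : ℕ) (y : Fin (n - 1) → (Fin (n + 1) → ℝ) → ℝ) (k : Fin (n - 1))
    (p : Fin (n + 1) → ℝ) : Fin (n + 1) → ℝ :=
  (Pi.single (xIdx k) 1 : Fin (n + 1) → ℝ)
    - pd (ynIdx n) (y k) p • (Pi.single (xnIdx n) 1 : Fin (n + 1) → ℝ)
    + pd (xnIdx n) (y k) p • (Pi.single (ynIdx n) 1 : Fin (n + 1) → ℝ)

theorem idx_cases {n : ℕ} (hn : 2 ≤ n) (i : Fin (n + 1)) :
    (∃ a : Fin (n - 1), i = xIdx a) ∨ i = xnIdx n ∨ i = ynIdx n := by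
  by_cases h : (i : ℕ) < n - 1
  · exact Or.inl ⟨⟨i, h⟩, rfl⟩
  · right
    by_cases h' : (i : ℕ) = n - 1
    · left; exact Fin.ext h'
    · right; apply Fin.ext; have := i.isLt; simp only [ynIdx]; omega

theorem graphMap_hasFDerivAt (n : ℕ) (hn : 2 ≤ n)
    (y : Fin (n - 1) → (Fin (n + 1) → ℝ) → ℝ) (z : (Fin (n + 1) → ℝ) → ℝ) (p : Fin (n + 1) → ℝ)
    (hy : ∀ a, DifferentiableAt ℝ (y a) p) (hz : DifferentiableAt ℝ z p)
    (u : Fin (n + 1) → ℝ) :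
    fderiv ℝ (graphMap n y z) p u = fun i : Fin (2 * n + 1) =>
      if h1 : (i : ℕ) < n then u ⟨i, by omega⟩
      else if h2 : (i : ℕ) < 2 * n - 1 then fderiv ℝ (y ⟨(i : ℕ) - n, by omega⟩) p u
      else if h3 : (i : ℕ) = 2 * n - 1 then u (ynIdx n)
      else fderiv ℝ z p u := by
  have key : ∀ i : Fin (2 * n + 1), ∃ L : (Fin (n + 1) → ℝ) →L[ℝ] ℝ,
      HasFDerivAt (fun q => graphMap n y z q i) L p ∧ L u =
      (if h1 : (i : ℕ) < n then u ⟨i, by omega⟩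
      else if h2 : (i : ℕ) < 2 * n - 1 then fderiv ℝ (y ⟨(i : ℕ) - n, by omega⟩) p u
      else if h3 : (i : ℕ) = 2 * n - 1 then u (ynIdx n)
      else fderiv ℝ z p u) := by
    intro i
    unfold graphMap
    split_ifs with h1 h2 h3
    · exact ⟨_, hasFDerivAt_apply _ _, rfl⟩
    · exact ⟨_, (hy _).hasFDerivAt, rfl⟩
    · exact ⟨_, hasFDerivAt_apply _ _, rfl⟩
    · exact ⟨_, hz.hasFDerivAt, rfl⟩
  choose L hL hLu using key
  have h : HasFDerivAt (graphMap n y z) (ContinuousLinearMap.pi L) p :=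
    hasFDerivAt_pi.2 hL
  rw [h.fderiv]
  funext i
  exact hLu i

theorem sum_split (n : ℕ) (hn : 2 ≤ n) (f : Fin n → ℝ) :
    ∑ i, f i = (∑ a : Fin (n - 1), f ⟨a, by omega⟩) + f ⟨n - 1, by omega⟩ := by
  obtain ⟨m, rfl⟩ : ∃ m, n = m + 1 := ⟨n - 1, by omega⟩
  exact Fin.sum_univ_castSucc f

/-- The pulled back contact form. -/
noncomputable def cA {n : ℕ} (y : Fin (n - 1) → (Fin (n + 1) → ℝ) → ℝ)
    (z : (Fin (n + 1) → ℝ) → ℝ) (p u : Fin (n + 1) → ℝ) : ℝ :=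
  fderiv ℝ z p u - ((∑ a, y a p * u (xIdx a)) + p (ynIdx n) * u (xnIdx n))

/-- The pulled back symplectic form. -/
noncomputable def cW {n : ℕ} (y : Fin (n - 1) → (Fin (n + 1) → ℝ) → ℝ)
    (p u v : Fin (n + 1) → ℝ) : ℝ :=
  (∑ a, (u (xIdx a) * fderiv ℝ (y a) p v - fderiv ℝ (y a) p u * v (xIdx a)))
    + (u (xnIdx n) * v (ynIdx n) - u (ynIdx n) * v (xnIdx n))

/-- The pulled back 3-form. -/
noncomputable def cT {n : ℕ} (y : Fin (n - 1) → (Fin (n + 1) → ℝ) → ℝ)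
    (z : (Fin (n + 1) → ℝ) → ℝ) (p u v w : Fin (n + 1) → ℝ) : ℝ :=
  cA y z p u * cW y p v w - cA y z p v * cW y p u w + cA y z p w * cW y p u v

theorem contact_eq (n : ℕ) (hn : 2 ≤ n)
    (y : Fin (n - 1) → (Fin (n + 1) → ℝ) → ℝ) (z : (Fin (n + 1) → ℝ) → ℝ) (p : Fin (n + 1) → ℝ)
    (hy : ∀ a, DifferentiableAt ℝ (y a) p) (hz : DifferentiableAt ℝ z p)
    (u : Fin (n + 1) → ℝ) :
    contactForm n (graphMap n y z p) (fderiv ℝ (graphMap n y z) p u) = cA y z p u := by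
  rw [graphMap_hasFDerivAt n hn y z p hy hz]
  unfold contactForm cA
  rw [sum_split n hn]
  have e1 : ¬ (2 * n < n) := by omega
  have e2 : ¬ (2 * n < 2 * n - 1) := by omega
  have e3 : ¬ (2 * n = 2 * n - 1) := by omega
  have e4 : n + (n - 1) = 2 * n - 1 := by omega
  have e5 : ¬ (2 * n - 1 < n) := by omega
  have e6 : n - 1 < n := by omega
  congr 1
  · simp [e1, e2, e3]
  · congr 1
    · refine Finset.sum_congr rfl fun a _ => ?_
      have := a.isLt
      have h1 : (a : ℕ) < n := by omega
      have h2 : n + (a : ℕ) < 2 * n - 1 := by omega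
      simp [graphMap, h1, h2, xIdx, Fin.castLE]
    · simp [graphMap, e4, e5, e6, xnIdx]

theorem omega_eq (n : ℕ) (hn : 2 ≤ n)
    (y : Fin (n - 1) → (Fin (n + 1) → ℝ) → ℝ) (z : (Fin (n + 1) → ℝ) → ℝ) (p : Fin (n + 1) → ℝ)
    (hy : ∀ a, DifferentiableAt ℝ (y a) p) (hz : DifferentiableAt ℝ z p)
    (u v : Fin (n + 1) → ℝ) :
    omega0 n (fderiv ℝ (graphMap n y z) p u) (fderiv ℝ (graphMap n y z) p v) = cW y p u v := by
  rw [graphMap_hasFDerivAt n hn y z p hy hz, graphMap_hasFDerivAt n hn y z p hy hz]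
  unfold omega0 cW
  rw [sum_split n hn]
  have e4 : n + (n - 1) = 2 * n - 1 := by omega
  have e5 : ¬ (2 * n - 1 < n) := by omega
  have e6 : n - 1 < n := by omega
  congr 1
  · refine Finset.sum_congr rfl fun a _ => ?_
    have := a.isLt
    have h1 : (a : ℕ) < n := by omega
    have h2 : n + (a : ℕ) < 2 * n - 1 := by omega
    simp [h1, h2, xIdx, Fin.castLE]
  · simp [e4, e5, e6, xnIdx]

section lin
variable {n : ℕ} (y : Fin (n - 1) → (Fin (n + 1) → ℝ) → ℝ)
    (z : (Fin (n + 1) → ℝ) → ℝ) (p : Fin (n + 1) → ℝ)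

theorem cA_lin : IsLinearMap ℝ (cA y z p) := by
  constructor
  · intro u v
    simp only [cA, map_add, Pi.add_apply, mul_add, Finset.sum_add_distrib]
    ring
  · intro c u
    simp only [cA, map_smul, Pi.smul_apply, smul_eq_mul, mul_sub, mul_add, Finset.mul_sum]
    simp only [mul_left_comm]

theorem cW_anti (u v : Fin (n + 1) → ℝ) : cW y p u v = - cW y p v u := by
  simp only [cW, neg_add, ← Finset.sum_neg_distrib]
  congr 1
  · exact Finset.sum_congr rfl fun a _ => by ring
  · ring

theorem cW_lin (w : Fin (n + 1) → ℝ) : IsLinearMap ℝ (fun u => cW y p u w) := by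
  constructor
  · intro u v
    simp only [cW, map_add, Pi.add_apply]
    rw [add_add_add_comm, ← Finset.sum_add_distrib]
    congr 1
    · exact Finset.sum_congr rfl fun a _ => by ring
    · ring
  · intro c u
    simp only [cW, map_smul, Pi.smul_apply, smul_eq_mul, mul_add, Finset.mul_sum]
    congr 1
    · exact Finset.sum_congr rfl fun a _ => by ring
    · ring

theorem cT_lin (v w : Fin (n + 1) → ℝ) : IsLinearMap ℝ (fun u => cT y z p u v w) := by
  constructor
  · intro a b
    simp only [cT, (cA_lin y z p).map_add, (cW_lin y p w).map_add, (cW_lin y p v).map_add]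
    ring
  · intro c a
    simp only [cT, (cA_lin y z p).map_smul, (cW_lin y p w).map_smul, (cW_lin y p v).map_smul,
      smul_eq_mul]
    ring

theorem cT_cyc (u v w : Fin (n + 1) → ℝ) : cT y z p u v w = cT y z p v w u := by
  simp only [cT]
  rw [cW_anti y p w u, cW_anti y p v u]
  ring

theorem cT_swap (u v w : Fin (n + 1) → ℝ) : cT y z p u v w = - cT y z p v u w := by
  simp only [cT]
  rw [cW_anti y p v u]
  ring

theorem lin_zero {m : ℕ} {f : (Fin m → ℝ) → ℝ} (hf : IsLinearMap ℝ f)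
    (h : ∀ i, f (Pi.single i 1) = 0) (u : Fin m → ℝ) : f u = 0 := by
  have : hf.mk' f = 0 := by
    apply LinearMap.pi_ext'
    intro i
    ext
    simpa using h i
  exact LinearMap.congr_fun this u

theorem cT_zero (h : ∀ i j k, cT y z p (Pi.single i 1) (Pi.single j 1) (Pi.single k 1) = 0)
    (u v w : Fin (n + 1) → ℝ) : cT y z p u v w = 0 := by
  refine lin_zero (cT_lin y z p v w) (fun i => ?_) u
  rw [cT_cyc]
  refine lin_zero (cT_lin y z p w _) (fun j => ?_) v
  rw [cT_cyc]
  refine lin_zero (cT_lin y z p _ _) (fun k => ?_) w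
  rw [cT_cyc]
  exact h i j k

theorem xx {a b : Fin (n - 1)} : (xIdx a = xIdx b) ↔ a = b := by
  simp [xIdx]

theorem x_ne_xn (a : Fin (n - 1)) : xIdx a ≠ xnIdx n := by
  intro h
  have := congrArg Fin.val h
  have := a.isLt
  simp [xIdx, xnIdx] at *
  omega

theorem x_ne_yn (a : Fin (n - 1)) : xIdx a ≠ ynIdx n := by
  intro h
  have := congrArg Fin.val h
  have := a.isLt
  simp [xIdx, ynIdx] at *
  omega

theorem xn_ne_yn (hn : 2 ≤ n) : xnIdx n ≠ ynIdx n := by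
  intro h
  have := congrArg Fin.val h
  simp [xnIdx, ynIdx] at this
  omega

theorem cA_x (a : Fin (n - 1)) :
    cA y z p (Pi.single (xIdx a) 1) = pd (xIdx a) z p - y a p := by
  simp [cA, pd, Pi.single_apply, xx, (x_ne_xn a).symm]

theorem cA_xn : cA y z p (Pi.single (xnIdx n) 1) = pd (xnIdx n) z p - p (ynIdx n) := by
  simp [cA, pd, Pi.single_apply, x_ne_xn]

theorem cA_yn (hn : 2 ≤ n) : cA y z p (Pi.single (ynIdx n) 1) = pd (ynIdx n) z p := by
  simp [cA, pd, Pi.single_apply, x_ne_yn, xn_ne_yn hn]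

theorem cW_xx (a b : Fin (n - 1)) :
    cW y p (Pi.single (xIdx a) 1) (Pi.single (xIdx b) 1)
      = pd (xIdx b) (y a) p - pd (xIdx a) (y b) p := by
  simp [cW, pd, Pi.single_apply, xx, (x_ne_xn _).symm, (x_ne_yn _).symm]

theorem cW_xxn (a : Fin (n - 1)) :
    cW y p (Pi.single (xIdx a) 1) (Pi.single (xnIdx n) 1) = pd (xnIdx n) (y a) p := by
  simp [cW, pd, Pi.single_apply, xx, x_ne_xn, (x_ne_xn _).symm, (x_ne_yn _).symm]

theorem cW_xyn (a : Fin (n - 1)) :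
    cW y p (Pi.single (xIdx a) 1) (Pi.single (ynIdx n) 1) = pd (ynIdx n) (y a) p := by
  simp [cW, pd, Pi.single_apply, xx, x_ne_yn, (x_ne_xn _).symm, (x_ne_yn _).symm]

theorem cW_xnyn (hn : 2 ≤ n) :
    cW y p (Pi.single (xnIdx n) 1) (Pi.single (ynIdx n) 1) = 1 := by
  simp [cW, Pi.single_apply, x_ne_yn, x_ne_xn, xn_ne_yn hn, (xn_ne_yn hn).symm]

theorem cT_E0 (a b c : Fin (n - 1)) :
    cT y z p (Pi.single (xIdx a) 1) (Pi.single (xIdx b) 1) (Pi.single (xIdx c) 1)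
      = E0 y z a b c p := by
  simp only [cT, cA_x, cW_xx, E0]

theorem cT_E1 (a b : Fin (n - 1)) :
    cT y z p (Pi.single (xIdx a) 1) (Pi.single (xIdx b) 1) (Pi.single (xnIdx n) 1)
      = E1 y z a b p := by
  simp only [cT, cA_x, cA_xn, cW_xx, cW_xxn, E1]

theorem cT_E2 (hn : 2 ≤ n) (a b : Fin (n - 1)) :
    cT y z p (Pi.single (xIdx a) 1) (Pi.single (xIdx b) 1) (Pi.single (ynIdx n) 1)
      = E2 y z a b p := by
  simp only [cT, cA_x, cA_yn y z p hn, cW_xx, cW_xyn, E2]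

theorem cT_E3 (hn : 2 ≤ n) (a : Fin (n - 1)) :
    cT y z p (Pi.single (xIdx a) 1) (Pi.single (xnIdx n) 1) (Pi.single (ynIdx n) 1)
      = E3 y z a p := by
  simp only [cT, cA_x, cA_xn, cA_yn y z p hn, cW_xxn, cW_xyn, cW_xnyn y p hn, E3]
  ring

theorem cT_self (u v : Fin (n + 1) → ℝ) : cT y z p u u v = 0 := by
  have := cT_swap y z p u u v
  linarith

theorem alt_cases {V A : Type*} (T : V → V → V → ℝ) (X : A → V) (N Y : V)
    (s0 : ∀ u v, T u u v = 0)
    (c1 : ∀ u v w, T u v w = 0 → T v w u = 0)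
    (c2 : ∀ u v w, T u v w = 0 → T v u w = 0)
    (g0 : ∀ a b c, T (X a) (X b) (X c) = 0) (g1 : ∀ a b, T (X a) (X b) N = 0)
    (g2 : ∀ a b, T (X a) (X b) Y = 0) (g3 : ∀ a, T (X a) N Y = 0) (u v w : V)
    (hu : ∀ P : V → Prop, (∀ a, P (X a)) → P N → P Y → P u)
    (hv : ∀ P : V → Prop, (∀ a, P (X a)) → P N → P Y → P v)
    (hw : ∀ P : V → Prop, (∀ a, P (X a)) → P N → P Y → P w) : T u v w = 0 := by
  have s1 : ∀ u v, T v u u = 0 := fun u v => c1 _ _ _ (c1 _ _ _ (s0 u v))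
  have s2 : ∀ u v, T u v u = 0 := fun u v => c1 _ _ _ (s0 u v)
  refine hu (fun u => T u v w = 0) (fun a => ?_) ?_ ?_ <;>
  refine hv (fun v => T _ v w = 0) (fun b => ?_) ?_ ?_ <;>
  refine hw (fun w => T _ _ w = 0) (fun c => ?_) ?_ ?_ <;>
  first
    | exact s0 _ _
    | exact s1 _ _
    | exact s2 _ _
    | exact g0 _ _ _
    | exact g1 _ _
    | exact g2 _ _
    | exact g3 _
    | exact c1 _ _ _ (g1 _ _)
    | exact c1 _ _ _ (c1 _ _ _ (g1 _ _))
    | exact c1 _ _ _ (g2 _ _)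
    | exact c1 _ _ _ (c1 _ _ _ (g2 _ _))
    | exact c1 _ _ _ (g3 _)
    | exact c1 _ _ _ (c1 _ _ _ (g3 _))
    | exact c2 _ _ _ (g3 _)
    | exact c1 _ _ _ (c2 _ _ _ (g3 _))
    | exact c1 _ _ _ (c1 _ _ _ (c2 _ _ _ (g3 _)))

theorem cT_iff (hn : 2 ≤ n) : (∀ u v w, cT y z p u v w = 0) ↔
    ((∀ a b c, E0 y z a b c p = 0) ∧ (∀ a b, E1 y z a b p = 0) ∧
        (∀ a b, E2 y z a b p = 0) ∧ (∀ a, E3 y z a p = 0)) := by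
  constructor
  · intro h
    refine ⟨fun a b c => ?_, fun a b => ?_, fun a b => ?_, fun a => ?_⟩
    · rw [← cT_E0]; exact h _ _ _
    · rw [← cT_E1]; exact h _ _ _
    · rw [← cT_E2 y z p hn]; exact h _ _ _
    · rw [← cT_E3 y z p hn]; exact h _ _ _
  · rintro ⟨h0, h1, h2, h3⟩
    have c1 : ∀ {u v w}, cT y z p u v w = 0 → cT y z p v w u = 0 := fun h => by
      rwa [← cT_cyc]
    have c2 : ∀ {u v w}, cT y z p u v w = 0 → cT y z p v u w = 0 := fun h => by
      rw [cT_swap, h, neg_zero]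
    have g1 := fun a b => (cT_E1 y z p a b).trans (h1 a b)
    have g2 := fun a b => (cT_E2 y z p hn a b).trans (h2 a b)
    have g3 := fun a => (cT_E3 y z p hn a).trans (h3 a)
    apply cT_zero
    intro i j k
    have hc : ∀ i : Fin (n + 1), ∀ P : (Fin (n + 1) → ℝ) → Prop,
        (∀ a : Fin (n - 1), P (Pi.single (xIdx a) 1)) → P (Pi.single (xnIdx n) 1) →
        P (Pi.single (ynIdx n) 1) → P (Pi.single i 1) := by
      intro i P q1 q2 q3
      rcases idx_cases hn i with ⟨a, rfl⟩ | rfl | rfl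
      · exact q1 a
      · exact q2
      · exact q3
    have g0 := fun a b c => (cT_E0 y z p a b c).trans (h0 a b c)
    exact alt_cases (cT y z p) (fun a : Fin (n - 1) => Pi.single (xIdx a) 1) _ _
      (fun u v => cT_self y z p u v) (fun u v w => c1) (fun u v w => c2) g0 g1 g2 g3 _ _ _
      (hc i) (hc j) (hc k)

end lin

/-- The 3-form `α ∧ ω₀` vanishes on the image of `dF` at every point of
`U` if and only if equations (E0), (E1), (E2), (E3) hold at every point of `U`. -/
theorem coisotropic_iff_foliation_equations (n : ℕ) (hn : 2 ≤ n) (U : Set (Fin (n + 1) → ℝ)) (hU : IsOpen U)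
    (y : Fin (n - 1) → (Fin (n + 1) → ℝ) → ℝ) (z : (Fin (n + 1) → ℝ) → ℝ)
    (hy : ∀ a, ContDiffOn ℝ (⊤ : ℕ∞) (y a) U) (hz : ContDiffOn ℝ (⊤ : ℕ∞) z U) :
    (∀ p ∈ U, ∀ u v w : Fin (n + 1) → ℝ,
        awedge n (graphMap n y z p)
          (fderiv ℝ (graphMap n y z) p u) (fderiv ℝ (graphMap n y z) p v)
          (fderiv ℝ (graphMap n y z) p w) = 0) ↔
      (∀ p ∈ U, (∀ a b c, E0 y z a b c p = 0) ∧ (∀ a b, E1 y z a b p = 0) ∧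
        (∀ a b, E2 y z a b p = 0) ∧ (∀ a, E3 y z a p = 0)) := by
  refine forall₂_congr fun p hp => ?_
  have hy' : ∀ a, DifferentiableAt ℝ (y a) p := fun a =>
    ((hy a).contDiffAt (hU.mem_nhds hp)).differentiableAt (by simp)
  have hz' : DifferentiableAt ℝ z p :=
    (hz.contDiffAt (hU.mem_nhds hp)).differentiableAt (by simp)
  rw [← cT_iff y z p hn]
  simp only [awedge, contact_eq n hn y z p hy' hz', omega_eq n hn y z p hy' hz', cT]
end

section
/- Let n ≥ 1, let V ⊆ ℝ^{n+1} be open with coordinates (t, x_1,…,x_n), and let f, R_1,…,R_n : V → ℝ be smooth. On the open set W = {(t,x,y) : (t,x) ∈ V, y ∈ ℝ^n} ⊆ ℝ^{2n+1} define the 1-form α = (f(t,x) + Σ_{i=1}^n R_i(t,x)·y_i)·dt − Σ_{i=1}^n y_i·dx_i. Then the (2n+1)-form α ∧ (dα)^n equals n!·f(t,x) times the volume form dx_1 ∧ dy_1 ∧ ⋯ ∧ dx_n ∧ dy_n ∧ dt at every point of W; in particular, α is a contact form (α ∧ (dα)^n ≠ 0) at every point where f > 0. -/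
open scoped BigOperators

/-- The exterior derivative of a 1-form `A` (a map assigning to each point a linear
functional, here recorded as a function of two arguments), evaluated at `q` on `u, v`:
`(dA)_q(u,v) = D(A(·)(v))_q(u) - D(A(·)(u))_q(v)`. -/
noncomputable def extD {N : ℕ} (A : (Fin N → ℝ) → (Fin N → ℝ) → ℝ)
    (q u v : Fin N → ℝ) : ℝ :=
  fderiv ℝ (fun r => A r v) q u - fderiv ℝ (fun r => A r u) q v

/-- Evaluation of the `(2m+1)`-form `β ∧ ω^{∧m}` (a 1-form `β` wedged with `m` copies of a
2-form `ω`, with the standard wedge conventions) on the vectors `v 0, …, v 2m`. -/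
noncomputable def wedgeEval (N m : ℕ) (β : (Fin N → ℝ) → ℝ)
    (ω : (Fin N → ℝ) → (Fin N → ℝ) → ℝ) (v : Fin (2 * m + 1) → Fin N → ℝ) : ℝ :=
  (1 / 2 ^ m : ℝ) * ∑ σ : Equiv.Perm (Fin (2 * m + 1)),
    ((Equiv.Perm.sign σ : ℤ) : ℝ) * β (v (σ ⟨0, by omega⟩)) *
      ∏ i : Fin m,
        ω (v (σ ⟨2 * (i : ℕ) + 1, by have := i.isLt; omega⟩))
          (v (σ ⟨2 * (i : ℕ) + 2, by have := i.isLt; omega⟩))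

/-- Projection of `ℝ^{2n+1}` with coordinates `(t, x_1,…,x_n, y_1,…,y_n)` onto the
`(t,x)`-factor `ℝ^{n+1}`. -/
def proj12 (n : ℕ) (q : Fin (2 * n + 1) → ℝ) : Fin (n + 1) → ℝ :=
  fun j => q (Fin.castLE (by omega) j)

/-- The 1-form `α = (f(t,x) + Σ R_i(t,x) y_i) dt - Σ y_i dx_i` on
`W ⊆ ℝ^{2n+1}` with coordinates `(t, x_1,…,x_n, y_1,…,y_n)`. -/
noncomputable def alpha12 (n : ℕ) (f : (Fin (n + 1) → ℝ) → ℝ)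
    (R : Fin n → (Fin (n + 1) → ℝ) → ℝ) (q v : Fin (2 * n + 1) → ℝ) : ℝ :=
  (f (proj12 n q) +
      ∑ i : Fin n, R i (proj12 n q) * q ⟨n + 1 + i, by have := i.isLt; omega⟩) *
    v ⟨0, by omega⟩
  - ∑ i : Fin n, q ⟨n + 1 + i, by have := i.isLt; omega⟩ * v ⟨1 + i, by have := i.isLt; omega⟩

/-- The position of the `j`-th covector in the volume form
`dx_1 ∧ dy_1 ∧ ⋯ ∧ dx_n ∧ dy_n ∧ dt`, in terms of the coordinate indices
`(t, x_1,…,x_n, y_1,…,y_n)` of `ℝ^{2n+1}`. -/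
def ord12 (n : ℕ) (j : Fin (2 * n + 1)) : Fin (2 * n + 1) :=
  if h1 : (j : ℕ) = 2 * n then ⟨0, by omega⟩
  else if h2 : (j : ℕ) % 2 = 0 then ⟨(j : ℕ) / 2 + 1, by have := j.isLt; omega⟩
  else ⟨n + (j : ℕ) / 2 + 1, by have := j.isLt; omega⟩


/-- The standard symplectic pairing on index pairs. -/
def stdW {n : ℕ} (a b : Fin n × Bool) : ℝ :=
  if a.1 = b.1 then (if a.2 = b.2 then 0 else if a.2 then -1 else 1) else 0

lemma perm_bool_aux (ε : Equiv.Perm Bool) :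
    (if ε false = ε true then (0:ℝ) else if ε false then -1 else 1)
      = ((Equiv.Perm.sign ε : ℤ) : ℝ) := by
  have h : (if ε false = ε true then (0:ℤ) else if ε false then -1 else 1)
      = (Equiv.Perm.sign ε : ℤ) := by
    revert ε; decide
  rw [← h]; push_cast; rfl

/-- The pair-preserving permutations. -/
def pairPerm {n : ℕ} (p : Equiv.Perm (Fin n) × (Fin n → Equiv.Perm Bool)) :
    Equiv.Perm (Fin n × Bool) :=
  Equiv.prodCongrLeft (fun _ : Bool => p.1) * Equiv.prodCongrRight p.2

lemma pairPerm_apply {n : ℕ} (p : Equiv.Perm (Fin n) × (Fin n → Equiv.Perm Bool))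
    (i : Fin n) (s : Bool) : pairPerm p (i, s) = (p.1 i, p.2 i s) := rfl

lemma pairPerm_sign {n : ℕ} (p : Equiv.Perm (Fin n) × (Fin n → Equiv.Perm Bool)) :
    Equiv.Perm.sign (pairPerm p) = ∏ i, Equiv.Perm.sign (p.2 i) := by
  rw [pairPerm, Equiv.Perm.sign_mul, Equiv.Perm.sign_prodCongrRight,
    Equiv.Perm.sign_prodCongrLeft]
  simp

lemma pairPerm_inj {n : ℕ} : Function.Injective (pairPerm (n := n)) := by
  intro p p' h
  have h' : ∀ i s, (p.1 i, p.2 i s) = (p'.1 i, p'.2 i s) := fun i s => by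
    rw [← pairPerm_apply, h, pairPerm_apply]
  refine Prod.ext (Equiv.ext fun i => ?_) (funext fun i => Equiv.ext fun s => ?_)
  · exact congrArg Prod.fst (h' i true)
  · exact congrArg Prod.snd (h' i s)

lemma pairPerm_surj {n : ℕ} (τ : Equiv.Perm (Fin n × Bool))
    (h : ∀ i, (τ (i, false)).1 = (τ (i, true)).1) : ∃ p, pairPerm p = τ := by
  have hs : ∀ i s, (τ (i, s)).1 = (τ (i, true)).1 := by
    intro i s; cases s
    · exact h i
    · rfl
  have hg : Function.Surjective (fun i => (τ (i, true)).1) := by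
    intro k
    refine ⟨(τ.symm (k, true)).1, ?_⟩
    have := hs (τ.symm (k, true)).1 (τ.symm (k, true)).2
    simp only [Prod.mk.eta, Equiv.apply_symm_apply] at this
    exact this.symm
  have hε : ∀ i, Function.Injective (fun s => (τ (i, s)).2) := by
    intro i s t hst
    have : τ (i, s) = τ (i, t) := Prod.ext ((hs i s).trans (hs i t).symm) hst
    simpa using τ.injective this
  refine ⟨(Equiv.ofBijective _ (Finite.injective_iff_bijective.1
      (Finite.injective_iff_surjective.2 hg)),
    fun i => Equiv.ofBijective _ (Finite.injective_iff_bijective.1 (hε i))), ?_⟩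
  ext1 ⟨i, s⟩
  rw [pairPerm_apply]
  exact Prod.ext (hs i s).symm rfl

lemma std_sum (n : ℕ) :
    ∑ τ : Equiv.Perm (Fin n × Bool), ((Equiv.Perm.sign τ : ℤ) : ℝ) *
      ∏ i : Fin n, stdW (τ (i, false)) (τ (i, true)) = 2 ^ n * (n.factorial : ℝ) := by
  have key : ∑ p : Equiv.Perm (Fin n) × (Fin n → Equiv.Perm Bool), (1 : ℝ) =
      ∑ τ : Equiv.Perm (Fin n × Bool), ((Equiv.Perm.sign τ : ℤ) : ℝ) *
      ∏ i : Fin n, stdW (τ (i, false)) (τ (i, true)) := by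
    refine Finset.sum_of_injOn pairPerm pairPerm_inj.injOn (by simp) ?_ ?_
    · intro τ _ hτ
      by_contra hne
      apply hτ
      have : ∀ i, (τ (i, false)).1 = (τ (i, true)).1 := by
        intro i
        by_contra hi
        exact hne (by
          rw [Finset.prod_eq_zero (Finset.mem_univ i), mul_zero]
          simp [stdW, hi])
      obtain ⟨p, hp⟩ := pairPerm_surj τ this
      exact ⟨p, by simp, hp⟩
    · intro p _
      rw [pairPerm_sign]
      have hW : ∀ i, stdW (pairPerm p (i, false)) (pairPerm p (i, true)) =
          ((Equiv.Perm.sign (p.2 i) : ℤ) : ℝ) := by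
        intro i
        rw [← perm_bool_aux, pairPerm_apply, pairPerm_apply]
        simp [stdW]
      simp only [hW]
      push_cast
      rw [← Finset.prod_mul_distrib]
      symm
      apply Finset.prod_eq_one
      intro i _
      rcases Int.units_eq_one_or (Equiv.Perm.sign (p.2 i)) with h | h <;> simp [h]
  rw [← key]
  simp [Fintype.card_perm, mul_comm]

/-- The multilinear map `v ↦ β (v none) * ∏ ω (v (i,0)) (v (i,1))`. -/
noncomputable def preWedge {E : Type*} [AddCommGroup E] [Module ℝ E] (n : ℕ)
    (β : E →ₗ[ℝ] ℝ) (ω : E →ₗ[ℝ] E →ₗ[ℝ] ℝ) :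
    MultilinearMap ℝ (fun _ : Option (Fin n × Bool) => E) ℝ :=
  MultilinearMap.mk' (fun v => β (v none) *
      ∏ i : Fin n, ω (v (some (i, false))) (v (some (i, true))))
    (by
      rintro v (_ | ⟨j, s⟩) x y
      · simp [add_mul]
      · simp only [ne_eq, reduceCtorEq, not_false_eq_true, Function.update_of_ne]
        rw [← mul_add]
        congr 1
        simp only [← Finset.mul_prod_erase Finset.univ _ (Finset.mem_univ j)]
        have hc : ∀ z, ∏ i ∈ Finset.univ.erase j,
            ω (Function.update v (some (j, s)) z (some (i, false)))
              (Function.update v (some (j, s)) z (some (i, true))) =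
            ∏ i ∈ Finset.univ.erase j, ω (v (some (i, false))) (v (some (i, true))) := by
          intro z
          refine Finset.prod_congr rfl fun i hi => ?_
          have hij : i ≠ j := (Finset.mem_erase.1 hi).1
          simp [Function.update_of_ne, hij]
        rw [hc, hc, hc, ← add_mul]
        cases s <;> simp)
    (by
      rintro v (_ | ⟨j, s⟩) c x
      · simp [mul_assoc]
      · simp only [ne_eq, reduceCtorEq, not_false_eq_true, Function.update_of_ne]
        rw [smul_eq_mul, mul_left_comm]
        congr 1
        simp only [← Finset.mul_prod_erase Finset.univ _ (Finset.mem_univ j)]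
        have hc : ∀ z, ∏ i ∈ Finset.univ.erase j,
            ω (Function.update v (some (j, s)) z (some (i, false)))
              (Function.update v (some (j, s)) z (some (i, true))) =
            ∏ i ∈ Finset.univ.erase j, ω (v (some (i, false))) (v (some (i, true))) := by
          intro z
          refine Finset.prod_congr rfl fun i hi => ?_
          have hij : i ≠ j := (Finset.mem_erase.1 hi).1
          simp [Function.update_of_ne, hij]
        rw [hc, hc, ← mul_assoc]
        cases s <;> simp)

lemma alt_apply {E : Type*} [AddCommGroup E] [Module ℝ E] (n : ℕ)
    (β : E →ₗ[ℝ] ℝ) (ω : E →ₗ[ℝ] E →ₗ[ℝ] ℝ) (v : Option (Fin n × Bool) → E) :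
    MultilinearMap.alternatization (preWedge n β ω) v =
    ∑ σ : Equiv.Perm (Option (Fin n × Bool)), ((Equiv.Perm.sign σ : ℤ) : ℝ) *
      β (v (σ none)) * ∏ i : Fin n, ω (v (σ (some (i, false)))) (v (σ (some (i, true)))) := by
  rw [MultilinearMap.alternatization_apply]
  refine Finset.sum_congr rfl fun σ _ => ?_
  rw [Units.smul_def, zsmul_eq_mul, mul_assoc]
  rfl

lemma core_std {E : Type*} [AddCommGroup E] [Module ℝ E] (n : ℕ)
    (β : E →ₗ[ℝ] ℝ) (ω : E →ₗ[ℝ] E →ₗ[ℝ] ℝ) (v : Option (Fin n × Bool) → E)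
    (h0 : ∀ a, ω (v none) (v (some a)) = 0) (h1 : ∀ a, ω (v (some a)) (v none) = 0)
    (hs : ∀ a b, ω (v (some a)) (v (some b)) = stdW a b) :
    MultilinearMap.alternatization (preWedge n β ω) v =
      2 ^ n * (n.factorial : ℝ) * β (v none) := by
  rw [alt_apply, ← Equiv.Perm.decomposeOption.symm.sum_comp, Fintype.sum_prod_type,
    Fintype.sum_option, ← std_sum, Finset.sum_mul]
  refine (congrArg₂ (· + ·) ?_ (Finset.sum_eq_zero ?_)).trans (add_zero _)
  · refine Finset.sum_congr rfl fun τ _ => ?_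
    simp [Equiv.Perm.decomposeOption, hs]
    ring
  · intro a _
    refine Finset.sum_eq_zero fun τ _ => ?_
    set σ := Equiv.Perm.decomposeOption.symm (some a, τ) with hσ
    have hn : σ none ≠ none := by simp [hσ, Equiv.Perm.decomposeOption]
    rcases hj : σ.symm none with _ | ⟨k, s⟩
    · exact absurd ((Equiv.symm_apply_eq _).1 hj).symm hn
    have hk : σ (some (k, s)) = none := ((Equiv.symm_apply_eq _).1 hj).symm
    rw [Finset.prod_eq_zero (Finset.mem_univ k), mul_zero]
    cases s
    · rw [hk]
      rcases hm : σ (some (k, true)) with _ | b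
      · have := σ.injective (hk.trans hm.symm); simp at this
      · exact h0 b
    · rw [hk]
      rcases hm : σ (some (k, false)) with _ | b
      · have := σ.injective (hk.trans hm.symm); simp at this
      · exact h1 b

lemma core {E : Type*} [AddCommGroup E] [Module ℝ E] (n : ℕ)
    (β : E →ₗ[ℝ] ℝ) (ω : E →ₗ[ℝ] E →ₗ[ℝ] ℝ) (v : Option (Fin n × Bool) → E)
    (c : Fin n × Bool → ℝ) (e : E) (he : e = v none + ∑ a, c a • v (some a))
    (h0 : ∀ a, ω e (v (some a)) = 0) (h1 : ∀ a, ω (v (some a)) e = 0)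
    (hs : ∀ a b, ω (v (some a)) (v (some b)) = stdW a b) :
    MultilinearMap.alternatization (preWedge n β ω) v =
      2 ^ n * (n.factorial : ℝ) * β e := by
  have : MultilinearMap.alternatization (preWedge n β ω) (Function.update v none e) =
      MultilinearMap.alternatization (preWedge n β ω) v := by
    rw [he, AlternatingMap.map_update_add, Function.update_eq_self,
      AlternatingMap.map_update_sum, Finset.sum_eq_zero, add_zero]
    intro a _
    rw [AlternatingMap.map_update_smul, AlternatingMap.map_update_self _ _ (by simp), smul_zero]
  rw [← this, core_std]
  · simp
  · simpa using h0
  · simpa using h1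
  · simpa using hs

/-- Positions in the wedge product. -/
def posFun (n : ℕ) : Option (Fin n × Bool) → Fin (2 * n + 1)
  | none => ⟨0, by omega⟩
  | some (i, false) => ⟨2 * (i : ℕ) + 1, by have := i.isLt; omega⟩
  | some (i, true) => ⟨2 * (i : ℕ) + 2, by have := i.isLt; omega⟩

lemma posFun_bij (n : ℕ) : Function.Bijective (posFun n) := by
  rw [Fintype.bijective_iff_injective_and_card]
  constructor
  · rintro (_ | ⟨i, _ | _⟩) (_ | ⟨j, _ | _⟩) h <;> simp [posFun] at h ⊢ <;> omega
  · simp [mul_comm]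

/-- Coordinate index of the vectors. -/
def vecIdx (n : ℕ) : Option (Fin n × Bool) → Fin (2 * n + 1)
  | none => ⟨0, by omega⟩
  | some (i, false) => ⟨1 + (i : ℕ), by have := i.isLt; omega⟩
  | some (i, true) => ⟨n + 1 + (i : ℕ), by have := i.isLt; omega⟩

lemma ord_rot (n : ℕ) (x : Option (Fin n × Bool)) :
    ord12 n ((finRotate (2 * n + 1))⁻¹ (posFun n x)) = vecIdx n x := by
  rcases x with _ | ⟨i, _ | _⟩
  · have : (finRotate (2 * n + 1))⁻¹ (posFun n none) = ⟨2 * n, by omega⟩ := by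
      rw [Equiv.Perm.inv_eq_iff_eq]
      exact finRotate_last'.symm
    rw [this]; simp [ord12, vecIdx]
  · have hi := i.isLt
    have : (finRotate (2 * n + 1))⁻¹ (posFun n (some (i, false))) =
        ⟨2 * (i : ℕ), by omega⟩ := by
      rw [Equiv.Perm.inv_eq_iff_eq]
      exact (finRotate_of_lt (by omega)).symm
    rw [this, ord12, dif_neg (by simp; omega), dif_pos (by simp)]
    simp only [vecIdx, Fin.mk.injEq]; omega
  · have hi := i.isLt
    have : (finRotate (2 * n + 1))⁻¹ (posFun n (some (i, true))) =
        ⟨2 * (i : ℕ) + 1, by omega⟩ := by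
      rw [Equiv.Perm.inv_eq_iff_eq]
      exact (finRotate_of_lt (by omega)).symm
    rw [this, ord12, dif_neg (by simp; omega), dif_neg (by simp)]
    simp only [vecIdx, Fin.mk.injEq]; omega

lemma wedgeEval_eq (n : ℕ) (β : (Fin (2 * n + 1) → ℝ) →ₗ[ℝ] ℝ)
    (ω : (Fin (2 * n + 1) → ℝ) →ₗ[ℝ] (Fin (2 * n + 1) → ℝ) →ₗ[ℝ] ℝ) :
    wedgeEval (2 * n + 1) n (fun v => β v) (fun u v => ω u v)
      (fun j => Pi.single (ord12 n j) 1) =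
    1 / 2 ^ n * MultilinearMap.alternatization (preWedge n β ω)
      (fun x => Pi.single (vecIdx n x) 1) := by
  rw [wedgeEval, alt_apply]
  congr 1
  let e := Equiv.ofBijective _ (posFun_bij n)
  refine (Fintype.sum_equiv
    ((Equiv.permCongr e).trans (Equiv.mulLeft (finRotate (2 * n + 1))⁻¹)) _ _ ?_).symm
  intro τ
  set σ := ((Equiv.permCongr e).trans (Equiv.mulLeft (finRotate (2 * n + 1))⁻¹)) τ with hσ
  have hsign : Equiv.Perm.sign σ = Equiv.Perm.sign τ := by
    simp [hσ, Equiv.Perm.sign_permCongr, sign_finRotate]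
  have hv : ∀ x, ord12 n (σ (posFun n x)) = vecIdx n (τ x) := by
    intro x
    rw [← ord_rot]
    congr 1
    change (finRotate (2 * n + 1))⁻¹ (e (τ (e.symm (e x)))) = _
    rw [e.symm_apply_apply]
    rfl
  rw [hsign, ← hv none]
  simp only [← hv]
  rfl

/-- The 1-form at a point, as a linear map. -/
noncomputable def betaL (n : ℕ) (H : ℝ) (y : Fin n → ℝ) : (Fin (2 * n + 1) → ℝ) →ₗ[ℝ] ℝ :=
  H • LinearMap.proj (vecIdx n none) -
    ∑ i, y i • LinearMap.proj (vecIdx n (some (i, false)))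

/-- The 2-form at a point, as a bilinear map. -/
noncomputable def omegaL (n : ℕ) (L : (Fin (2 * n + 1) → ℝ) →ₗ[ℝ] ℝ) :
    (Fin (2 * n + 1) → ℝ) →ₗ[ℝ] (Fin (2 * n + 1) → ℝ) →ₗ[ℝ] ℝ :=
  L.smulRight (LinearMap.proj (R := ℝ) (φ := fun _ => ℝ) (vecIdx n none)) -
  (LinearMap.proj (R := ℝ) (φ := fun _ => ℝ) (vecIdx n none)).smulRight L +
  ∑ i, ((LinearMap.proj (R := ℝ) (φ := fun _ => ℝ) (vecIdx n (some (i, false)))).smulRight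
      (LinearMap.proj (R := ℝ) (φ := fun _ => ℝ) (vecIdx n (some (i, true)))) -
    (LinearMap.proj (R := ℝ) (φ := fun _ => ℝ) (vecIdx n (some (i, true)))).smulRight
      (LinearMap.proj (R := ℝ) (φ := fun _ => ℝ) (vecIdx n (some (i, false)))))

lemma omegaL_apply (n : ℕ) (L : (Fin (2 * n + 1) → ℝ) →ₗ[ℝ] ℝ) (u v) :
    omegaL n L u v = L u * v (vecIdx n none) - u (vecIdx n none) * L v +
      ∑ i, (u (vecIdx n (some (i, false))) * v (vecIdx n (some (i, true))) -
        u (vecIdx n (some (i, true))) * v (vecIdx n (some (i, false)))) := by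
  simp [omegaL, LinearMap.sum_apply]

lemma vecIdx_inj (n : ℕ) : Function.Injective (vecIdx n) := by
  rintro (_ | ⟨i, _ | _⟩) (_ | ⟨j, _ | _⟩) h <;> simp [vecIdx] at h ⊢ <;> omega

lemma single_vecIdx (n : ℕ) (x z : Option (Fin n × Bool)) :
    (Pi.single (vecIdx n x) 1 : Fin (2 * n + 1) → ℝ) (vecIdx n z) = if z = x then 1 else 0 := by
  rw [Pi.single_apply]
  simp [(vecIdx_inj n).eq_iff]

lemma omegaL_std (n : ℕ) (L : (Fin (2 * n + 1) → ℝ) →ₗ[ℝ] ℝ) (a b : Fin n × Bool) :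
    omegaL n L (Pi.single (vecIdx n (some a)) 1) (Pi.single (vecIdx n (some b)) 1) =
      stdW a b := by
  obtain ⟨i, s⟩ := a
  obtain ⟨j, t⟩ := b
  rw [omegaL_apply]
  simp only [single_vecIdx]
  by_cases h : i = j
  · cases s <;> cases t <;> simp [stdW, h]
  · have h' : ¬ j = i := fun e => h e.symm
    cases s <;> cases t <;> simp [stdW, h, h']

lemma omegaL_swap (n : ℕ) (L : (Fin (2 * n + 1) → ℝ) →ₗ[ℝ] ℝ) (u v) :
    omegaL n L u v = - omegaL n L v u := by
  rw [omegaL_apply, omegaL_apply, neg_add, ← Finset.sum_neg_distrib]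
  congr 1
  · ring
  · exact Finset.sum_congr rfl fun i _ => by ring

lemma alg_main (n : ℕ) (L : (Fin (2 * n + 1) → ℝ) →ₗ[ℝ] ℝ) (H : ℝ) (y : Fin n → ℝ) :
    wedgeEval (2 * n + 1) n (fun v => betaL n H y v) (fun u v => omegaL n L u v)
      (fun j => Pi.single (ord12 n j) 1) =
    n.factorial * (H - ∑ i, y i * L (Pi.single (vecIdx n (some (i, true))) 1)) := by
  let v : Option (Fin n × Bool) → (Fin (2 * n + 1) → ℝ) := fun x => Pi.single (vecIdx n x) 1
  let c : Fin n × Bool → ℝ := fun a =>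
    if a.2 then - L (v (some (a.1, false))) else L (v (some (a.1, true)))
  have h0 : ∀ a, omegaL n L (v none + ∑ a, c a • v (some a)) (v (some a)) = 0 := by
    rintro ⟨i, s⟩
    rw [map_add, map_sum, LinearMap.add_apply, LinearMap.sum_apply]
    simp only [map_smul, LinearMap.smul_apply]
    simp only [v, omegaL_std]
    rw [Fintype.sum_prod_type, omegaL_apply]
    simp only [single_vecIdx]
    cases s <;> simp [stdW, c, v, mul_ite]
  rw [wedgeEval_eq, core n _ _ _ c _ rfl h0 (fun a => by rw [omegaL_swap]; rw [h0]; simp)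
    (omegaL_std n L)]
  have : betaL n H y (v none + ∑ a, c a • v (some a)) =
      H - ∑ i, y i * L (Pi.single (vecIdx n (some (i, true))) 1) := by
    rw [map_add, map_sum]
    simp only [map_smul, betaL, LinearMap.sub_apply, LinearMap.smul_apply, LinearMap.sum_apply,
      LinearMap.proj_apply, v, single_vecIdx]
    rw [Fintype.sum_prod_type]
    simp [c, v, Finset.sum_neg_distrib, mul_comm, sub_eq_add_neg]
  have e1 : (v none + ∑ a, c a • v (some a)) = ((Pi.single (vecIdx n none) 1 : Fin (2 * n + 1) → ℝ) + ∑ a, c a • Pi.single (vecIdx n (some a)) 1) := rfl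
  rw [← e1, this]
  field_simp


lemma alpha_eq_beta (n : ℕ) (f : (Fin (n + 1) → ℝ) → ℝ)
    (R : Fin n → (Fin (n + 1) → ℝ) → ℝ) (q : Fin (2 * n + 1) → ℝ) :
    alpha12 n f R q = fun v => betaL n (f (proj12 n q) +
      ∑ i : Fin n, R i (proj12 n q) * q (vecIdx n (some (i, true))))
      (fun i => q (vecIdx n (some (i, true)))) v := by
  funext v
  simp [betaL, alpha12, vecIdx, LinearMap.sum_apply]

/-- The projection as a continuous linear map. -/
noncomputable def projL (n : ℕ) : (Fin (2 * n + 1) → ℝ) →L[ℝ] (Fin (n + 1) → ℝ) :=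
  ContinuousLinearMap.pi fun j =>
    ContinuousLinearMap.proj (R := ℝ) (φ := fun _ => ℝ) (Fin.castLE (by omega) j)

lemma projL_apply (n : ℕ) (q) : projL n q = proj12 n q := rfl

lemma projL_single (n : ℕ) (i : Fin n) :
    projL n (Pi.single (vecIdx n (some (i, true))) 1) = 0 := by
  funext j
  simp only [projL, ContinuousLinearMap.pi_apply, ContinuousLinearMap.proj_apply, Pi.zero_apply]
  rw [Pi.single_eq_of_ne]
  intro h
  have := congrArg Fin.val h
  have := j.isLt
  simp [vecIdx] at *
  omega

lemma H_deriv (n : ℕ) (V : Set (Fin (n + 1) → ℝ))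
    (hV : IsOpen V) (f : (Fin (n + 1) → ℝ) → ℝ) (R : Fin n → (Fin (n + 1) → ℝ) → ℝ)
    (hf : ContDiffOn ℝ (⊤ : ℕ∞) f V) (hR : ∀ i, ContDiffOn ℝ (⊤ : ℕ∞) (R i) V)
    (q : Fin (2 * n + 1) → ℝ) (hq : proj12 n q ∈ V) :
    ∃ L : (Fin (2 * n + 1) → ℝ) →L[ℝ] ℝ,
      HasFDerivAt (fun q => f (proj12 n q) +
        ∑ i : Fin n, R i (proj12 n q) * q (vecIdx n (some (i, true)))) L q ∧
      ∀ i, L (Pi.single (vecIdx n (some (i, true))) 1) = R i (proj12 n q) := by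
  have hd : ∀ g : (Fin (n + 1) → ℝ) → ℝ, ContDiffOn ℝ (⊤ : ℕ∞) g V →
      HasFDerivAt (fun q => g (proj12 n q)) ((fderiv ℝ g (proj12 n q)).comp (projL n)) q := by
    intro g hg
    have h1 : DifferentiableAt ℝ g (proj12 n q) :=
      (hg.contDiffAt (hV.mem_nhds hq)).differentiableAt (by simp)
    exact HasFDerivAt.comp q (f := projL n) h1.hasFDerivAt (projL n).hasFDerivAt
  have hp : ∀ k, HasFDerivAt (fun q : Fin (2 * n + 1) → ℝ => q k)
      (ContinuousLinearMap.proj (R := ℝ) (φ := fun _ => ℝ) k) q := fun k =>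
    hasFDerivAt_apply k q
  refine ⟨_, (hd f hf).add (HasFDerivAt.fun_sum fun i _ => (hd (R i) (hR i)).mul (hp _)), ?_⟩
  intro i
  simp only [ContinuousLinearMap.add_apply, ContinuousLinearMap.sum_apply,
    ContinuousLinearMap.comp_apply, projL_single, ContinuousLinearMap.smul_apply, map_zero,
    ContinuousLinearMap.proj_apply, single_vecIdx]
  simp

lemma extD_eq (n : ℕ) (f : (Fin (n + 1) → ℝ) → ℝ) (R : Fin n → (Fin (n + 1) → ℝ) → ℝ)
    (q : Fin (2 * n + 1) → ℝ) (L : (Fin (2 * n + 1) → ℝ) →L[ℝ] ℝ)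
    (hL : HasFDerivAt (fun q => f (proj12 n q) +
        ∑ i : Fin n, R i (proj12 n q) * q (vecIdx n (some (i, true)))) L q) :
    extD (alpha12 n f R) q = fun u v => omegaL n L.toLinearMap u v := by
  have hp : ∀ k, HasFDerivAt (fun q : Fin (2 * n + 1) → ℝ => q k)
      (ContinuousLinearMap.proj (R := ℝ) (φ := fun _ => ℝ) k) q := fun k =>
    hasFDerivAt_apply k q
  have key : ∀ u v, fderiv ℝ (fun r => alpha12 n f R r v) q u =
      L u * v (vecIdx n none) -
        ∑ i, u (vecIdx n (some (i, true))) * v (vecIdx n (some (i, false))) := by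
    intro u v
    have h := (hL.mul_const (v (vecIdx n none))).sub
      (HasFDerivAt.fun_sum (u := Finset.univ) fun (i : Fin n) _ =>
        (hp (vecIdx n (some (i, true)))).mul_const (v (vecIdx n (some (i, false)))))
    have h' : fderiv ℝ (fun r => alpha12 n f R r v) q = _ := HasFDerivAt.fderiv h
    rw [h']
    simp [ContinuousLinearMap.sum_apply, mul_comm]
  funext u v
  rw [extD, key, key, omegaL_apply, Finset.sum_sub_distrib]
  simp only [ContinuousLinearMap.coe_coe, mul_comm]
  ring


/-- For `α = (f + Σ R_i y_i) dt - Σ y_i dx_i` on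
`W = V × ℝ^n ⊆ ℝ^{2n+1}`, one has `α ∧ (dα)^n = n! · f · dx_1∧dy_1∧⋯∧dx_n∧dy_n∧dt`
at every point of `W`; in particular `α` is contact wherever `f > 0`. -/
theorem alpha_wedge_dalpha_pow (n : ℕ) (hn : 1 ≤ n) (V : Set (Fin (n + 1) → ℝ))
    (hV : IsOpen V) (f : (Fin (n + 1) → ℝ) → ℝ) (R : Fin n → (Fin (n + 1) → ℝ) → ℝ)
    (hf : ContDiffOn ℝ (⊤ : ℕ∞) f V) (hR : ∀ i, ContDiffOn ℝ (⊤ : ℕ∞) (R i) V) :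
    ∀ q : Fin (2 * n + 1) → ℝ, proj12 n q ∈ V →
      wedgeEval (2 * n + 1) n (alpha12 n f R q) (extD (alpha12 n f R) q)
          (fun j => Pi.single (ord12 n j) 1) = (n.factorial : ℝ) * f (proj12 n q) ∧
        (0 < f (proj12 n q) →
          wedgeEval (2 * n + 1) n (alpha12 n f R q) (extD (alpha12 n f R) q)
            (fun j => Pi.single (ord12 n j) 1) ≠ 0) := by
  intro q hq
  obtain ⟨L, hL, hLi⟩ := H_deriv n V hV f R hf hR q hq
  have main : wedgeEval (2 * n + 1) n (alpha12 n f R q) (extD (alpha12 n f R) q)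
      (fun j => Pi.single (ord12 n j) 1) = (n.factorial : ℝ) * f (proj12 n q) := by
    rw [extD_eq n f R q L hL, alpha_eq_beta, alg_main]
    simp only [ContinuousLinearMap.coe_coe, hLi]
    congr 1
    rw [sub_eq_iff_eq_add]
    congr 1
    exact Finset.sum_congr rfl fun i _ => mul_comm _ _
  refine ⟨main, fun hpos => ?_⟩
  rw [main]
  have := n.factorial_pos
  positivity
end
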